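/- arXiv:1409.8423 — 5 statements merged into one kernel-verified Lean document; each statement's English description precedes it below -/
import Mathlib

section
/- Let A ∈ ℤ∖{0,±1} be a cube-free integer, let α ∈ ℤ[ζ₃] be a nonzero cube-free integer, and let q be a prime element of ℤ[ζ₃] such that q divides α but q does not divide A. Then C_{A,α}(k_q) = ∅; that is, there is no (x,y,z) ∈ k_q³ ∖ {(0,0,0)} with αx³ + α⁻¹y³ = Az³ (equivalently, α²x³ + y³ = αAz³). -/
open NumberField IsDedekindDomain

/-- The height-one prime of a Dedekind domain determined by a prime element. -/
noncomputable def primeSpec {R : Type*} [CommRing R] [IsDomain R] [IsDedekindDomain R]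
    {q : R} (hq : Prime q) : HeightOneSpectrum R where
  asIdeal := Ideal.span {q}
  isPrime := (Ideal.span_singleton_prime hq.ne_zero).mpr hq
  ne_bot := by simpa [Ne, Ideal.span_singleton_eq_bot] using hq.ne_zero

theorem exp_cube_aux (m n : ℤ) (h : ¬ (3:ℤ) ∣ m - n) (X Y : WithZero (Multiplicative ℤ))
    (e : WithZero.exp m * X ^ 3 = WithZero.exp n * Y ^ 3) : X = 0 ∧ Y = 0 := by
  by_cases hX : X = 0
  · subst hX
    refine ⟨rfl, ?_⟩
    simpa using e.symm
  by_cases hY : Y = 0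
  · subst hY
    exact absurd (by simpa using e) hX
  exfalso
  have e2 := congrArg WithZero.log e
  rw [WithZero.log_mul (by simp) (by simpa using hX), WithZero.log_mul (by simp) (by simpa using hY),
    WithZero.log_pow, WithZero.log_pow, WithZero.log_exp, WithZero.log_exp] at e2
  simp only [nsmul_eq_mul] at e2
  push_cast at e2
  omega

theorem val_aux {L : Type*} [Field L] (v : Valuation L (WithZero (Multiplicative ℤ)))
    (a A x y z : L) (n : ℤ) (hn : n = -1 ∨ n = -2) (ha : v a = WithZero.exp n) (hA : v A = 1)
    (h : a * x ^ 3 + a⁻¹ * y ^ 3 = A * z ^ 3) : x = 0 ∧ y = 0 ∧ z = 0 := by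
  have hs : v (a * x ^ 3) = WithZero.exp n * v x ^ 3 := by simp [ha]
  have ht : v (a⁻¹ * y ^ 3) = WithZero.exp (-n) * v y ^ 3 := by simp [ha, WithZero.exp_neg]
  have hu : v (A * z ^ 3) = WithZero.exp 0 * v z ^ 3 := by simp [hA]
  have key : v x = 0 ∧ v y = 0 ∧ v z = 0 := by
    by_cases hst : v (a * x ^ 3) = v (a⁻¹ * y ^ 3)
    · rw [hs, ht] at hst
      obtain ⟨h1, h2⟩ := exp_cube_aux _ _ (by omega) _ _ hst
      refine ⟨h1, h2, ?_⟩
      rw [Valuation.zero_iff] at h1 h2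
      subst h1 h2
      have : v (A * z ^ 3) = 0 := by rw [← h]; simp
      rw [hu] at this
      simpa using this
    · have hm := Valuation.map_add_of_distinct_val v hst
      rw [h] at hm
      rcases le_total (v (a * x ^ 3)) (v (a⁻¹ * y ^ 3)) with hle | hle
      · rw [max_eq_right hle, hu, ht] at hm
        obtain ⟨h1, h2⟩ := exp_cube_aux _ _ (by omega) _ _ hm
        rw [hs, ht, h2] at hle
        refine ⟨?_, h2, h1⟩
        simpa using hle
      · rw [max_eq_left hle, hu, hs] at hm
        obtain ⟨h1, h2⟩ := exp_cube_aux _ _ (by omega) _ _ hm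
        rw [hs, ht, h2] at hle
        refine ⟨h2, ?_, h1⟩
        simpa using hle
  simpa using key

/-- Lemma 2.1: if `A ∈ ℤ ∖ {0, ±1}` is cube-free, `α ∈ ℤ[ζ₃]` is a nonzero
cube-free integer, and `q` is a prime of `ℤ[ζ₃]` dividing `α` but not `A`, then the curve
`α x³ + α⁻¹ y³ = A z³` has no `k_q`-rational point. -/
theorem stmt0 (K : Type*) [Field K] [NumberField K] [IsCyclotomicExtension {3} ℚ K]
    (A : ℤ) (hA0 : A ≠ 0) (hA1 : A ≠ 1) (hA1' : A ≠ -1)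
    (hAcf : ∀ p : ℤ, Prime p → ¬ p ^ 3 ∣ A)
    (α : 𝓞 K) (hα0 : α ≠ 0) (hαcf : ∀ p : 𝓞 K, Prime p → ¬ p ^ 3 ∣ α)
    (q : 𝓞 K) (hq : Prime q) (hqα : q ∣ α) (hqA : ¬ q ∣ (A : 𝓞 K)) :
    ¬ ∃ x y z : (primeSpec hq).adicCompletion K,
        ¬(x = 0 ∧ y = 0 ∧ z = 0) ∧
        algebraMap (𝓞 K) ((primeSpec hq).adicCompletion K) α * x ^ 3
          + (algebraMap (𝓞 K) ((primeSpec hq).adicCompletion K) α)⁻¹ * y ^ 3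
          = algebraMap K ((primeSpec hq).adicCompletion K) (A : K) * z ^ 3 := by
  rintro ⟨x, y, z, hne, h⟩
  apply hne
  have hα1 : (primeSpec hq).intValuation α ≤ WithZero.exp (-((1:ℕ):ℤ)) := by
    rw [HeightOneSpectrum.intValuation_le_pow_iff_dvd]
    simpa [primeSpec, Ideal.dvd_span_singleton, Ideal.mem_span_singleton] using hqα
  have hα3 : ¬ (primeSpec hq).intValuation α ≤ WithZero.exp (-((3:ℕ):ℤ)) := by
    rw [HeightOneSpectrum.intValuation_le_pow_iff_dvd]
    simpa [primeSpec, Ideal.span_singleton_pow, Ideal.dvd_span_singleton,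
      Ideal.mem_span_singleton] using hαcf q hq
  have hA : (primeSpec hq).intValuation (A : 𝓞 K) = 1 := by
    rw [HeightOneSpectrum.intValuation_eq_one_iff]
    simpa [primeSpec, Ideal.mem_span_singleton] using hqA
  have hv0 : (primeSpec hq).intValuation α ≠ 0 :=
    HeightOneSpectrum.intValuation_ne_zero _ _ hα0
  obtain ⟨n, hn⟩ : ∃ n : ℤ, (primeSpec hq).intValuation α = WithZero.exp n :=
    ⟨_, (WithZero.exp_log hv0).symm⟩
  rw [hn, WithZero.exp_le_exp] at hα1 hα3
  refine val_aux (Valued.v : Valuation ((primeSpec hq).adicCompletion K) _) _ _ x y z n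
    (by omega) ?_ ?_ h
  · rw [← hn, ← HeightOneSpectrum.valuation_of_algebraMap (K := K)]
    exact HeightOneSpectrum.valuedAdicCompletion_eq_valuation' _ _
  · rw [← hA, ← HeightOneSpectrum.valuation_of_algebraMap (K := K)]
    have hc : ((A : 𝓞 K) : K) = (A : K) := map_intCast (algebraMap (𝓞 K) K) A
    exact (HeightOneSpectrum.valuedAdicCompletion_eq_valuation' _ _).trans
      (congrArg (HeightOneSpectrum.valuation K (primeSpec hq)) hc.symm)
end

section
/- Let A ∈ ℤ∖{0,±1} be a cube-free integer, let α ∈ ℤ[ζ₃] be a nonzero cube-free integer, and let q be a prime element of ℤ[ζ₃] such that q‖A (q divides A but q² does not), q does not divide 3, and q does not divide α. Then C_{A,α}(k_q) ≠ ∅ if and only if the image of α in the residue field 𝔽_q = ℤ[ζ₃]/(q) is a nonzero cube in 𝔽_q. -/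
open NumberField IsDedekindDomain

theorem aux_inv {R : Type*} [CommRing R] [IsDomain R] [IsDedekindDomain R]
    {q : R} (hq : Prime q) {a : R} (ha : ¬ q ∣ a) : ∃ w m, a * w = 1 + q * m := by
  have hmax : (Ideal.span {q}).IsMaximal := (primeSpec hq).isMaximal
  have h0 : Ideal.Quotient.mk (Ideal.span {q}) a ≠ 0 := by
    rw [Ne, Ideal.Quotient.eq_zero_iff_mem, Ideal.mem_span_singleton]; exact ha
  obtain ⟨b, hb⟩ := Ideal.Quotient.exists_inv h0
  obtain ⟨w, rfl⟩ := Ideal.Quotient.mk_surjective b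
  rw [← map_mul, ← map_one (Ideal.Quotient.mk (Ideal.span {q})), Ideal.Quotient.eq,
    Ideal.mem_span_singleton] at hb
  obtain ⟨m, hm⟩ := hb
  exact ⟨w, m, by linear_combination hm⟩

theorem aux_step {R : Type*} [CommRing R] [IsDomain R] [IsDedekindDomain R]
    {q : R} (hq : Prime q) (hq3 : ¬ q ∣ 3) {α : R} (n : ℕ) (a : R) (ha : ¬ q ∣ a)
    (h : q ^ (n + 1) ∣ a ^ 3 - α) :
    ∃ b, ¬ q ∣ b ∧ q ^ (n + 1) ∣ b - a ∧ q ^ (n + 2) ∣ b ^ 3 - α := by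
  have h3 : ¬ q ∣ 3 * a ^ 2 := fun h => (hq.dvd_or_dvd h).elim hq3
    (fun h => ha (hq.dvd_of_dvd_pow h))
  obtain ⟨w, m, hw⟩ := aux_inv hq h3
  obtain ⟨s, hs⟩ := h
  refine ⟨a + q ^ (n + 1) * (-s * w), ?_, ⟨-s * w, by ring⟩,
    ⟨-s * m + q ^ n * (3 * a * (s * w) ^ 2 + q ^ (n + 1) * (-s * w) ^ 3), ?_⟩⟩
  · intro h
    apply ha
    have : q ∣ q ^ (n + 1) * (-s * w) := Dvd.intro (q ^ n * (-s * w)) (by ring)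
    exact (dvd_add_left this).mp h
  · linear_combination hs - q ^ (n + 1) * s * hw

theorem aux_seq {R : Type*} [CommRing R] [IsDomain R] [IsDedekindDomain R]
    {q : R} (hq : Prime q) (hq3 : ¬ q ∣ 3) {α : R} (a : R) (ha : ¬ q ∣ a)
    (h : q ∣ a ^ 3 - α) :
    ∃ s : ℕ → R, ∀ n, q ^ (n + 1) ∣ s (n + 1) - s n ∧ q ^ (n + 1) ∣ s n ^ 3 - α := by
  choose! f hf using aux_step hq hq3 (α := α)
  let s : ℕ → R := fun n => Nat.rec a (fun n x => f n x) n
  have hs : ∀ n, ¬ q ∣ s n ∧ q ^ (n + 1) ∣ s n ^ 3 - α := by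
    intro n
    induction n with
    | zero => exact ⟨ha, by rw [zero_add, pow_one]; exact h⟩
    | succ n ih => exact ⟨(hf n _ ih.1 ih.2).1, (hf n _ ih.1 ih.2).2.2⟩
  exact ⟨s, fun n => ⟨(hf n _ (hs n).1 (hs n).2).2.1, (hs n).2⟩⟩

theorem aux_cube {K : Type*} [Field K] [NumberField K] {q : 𝓞 K} (hq : Prime q)
    (hq3 : ¬ q ∣ 3) {α : 𝓞 K} (a : 𝓞 K) (ha : ¬ q ∣ a) (h : q ∣ a ^ 3 - α) :
    ∃ g : (primeSpec hq).adicCompletion K,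
      g ^ 3 = algebraMap (𝓞 K) ((primeSpec hq).adicCompletion K) α := by
  obtain ⟨s, hs⟩ := aux_seq hq hq3 a ha h
  set V := primeSpec hq with hV
  set φ := algebraMap (𝓞 K) (V.adicCompletion K) with hφ
  have hle : ∀ x, ‖φ x‖ ≤ 1 := fun x => FinitePlace.norm_le_one K V x
  have hlt : ‖φ q‖ < 1 := (FinitePlace.norm_lt_one_iff_mem K V q).2
    (Ideal.mem_span_singleton_self q)
  have hdvd : ∀ n x, q ^ n ∣ x → ‖φ x‖ ≤ ‖φ q‖ ^ n := by
    rintro n x ⟨y, rfl⟩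
    rw [map_mul, map_pow, norm_mul, norm_pow]
    exact mul_le_of_le_one_right (by positivity) (hle y)
  have hc : CauchySeq (fun n => φ (s n)) := by
    apply cauchySeq_of_le_geometric ‖φ q‖ 1 hlt
    intro n
    rw [dist_comm, dist_eq_norm, ← map_sub, one_mul]
    exact (hdvd _ _ (hs n).1).trans (pow_le_pow_of_le_one (norm_nonneg _) hlt.le (by omega))
  obtain ⟨g, hg⟩ := cauchySeq_tendsto_of_complete hc
  refine ⟨g, ?_⟩
  have h1 := hg.pow 3
  have h2 : Filter.Tendsto (fun n => φ (s n) ^ 3) Filter.atTop (nhds (φ α)) := by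
    rw [tendsto_iff_norm_sub_tendsto_zero]
    refine squeeze_zero (fun _ => norm_nonneg _) (fun n => ?_)
      (tendsto_pow_atTop_nhds_zero_of_lt_one (norm_nonneg _) hlt)
    rw [← map_pow, ← map_sub]
    exact (hdvd _ _ (hs n).2).trans (pow_le_pow_of_le_one (norm_nonneg _) hlt.le (by omega))
  exact tendsto_nhds_unique h1 h2

open WithZero in
theorem aux_val {a b : WithZero (Multiplicative ℤ)} (h : a ^ 3 = exp (-1 : ℤ) * b ^ 3) :
    a = 0 := by
  by_contra ha
  have hb : b ≠ 0 := by
    rintro rfl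
    simp at h
    exact ha h
  have := congrArg WithZero.log h
  rw [WithZero.log_mul (by simp) (by simp [hb]), WithZero.log_pow, WithZero.log_pow,
    WithZero.log_exp] at this
  simp only [nsmul_eq_mul] at this
  push_cast at this
  omega

theorem aux_approx {K : Type*} [Field K] [NumberField K] (V : HeightOneSpectrum (𝓞 K))
    (u : V.adicCompletion K) (hu : Valued.v u ≤ 1) :
    ∃ a : 𝓞 K, Valued.v (algebraMap (𝓞 K) (V.adicCompletion K) a - u) < 1 := by
  have hn : {y : V.adicCompletion K | Valued.v (y - u) < 1} ∈ nhds u := by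
    rw [Valued.mem_nhds]
    refine ⟨1, fun y hy => ?_⟩
    simpa [Valuation.restrict_lt_one_iff] using hy
  obtain ⟨y, ⟨c, hcy⟩, hc⟩ := (HeightOneSpectrum.denseRange_algebraMap K V).inter_nhds_nonempty hn
  subst hcy
  change Valued.v (algebraMap K (V.adicCompletion K) c - u) < 1 at hc
  have hcv : V.valuation K c ≤ 1 := by
    rw [← HeightOneSpectrum.valuedAdicCompletion_eq_valuation']
    have : algebraMap K (V.adicCompletion K) c = (algebraMap K (V.adicCompletion K) c - u) + u := by
      ring
    change Valued.v (algebraMap K (V.adicCompletion K) c) ≤ 1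
    rw [this]
    exact (Valuation.map_add _ _ _).trans (max_le (le_of_lt hc) hu)
  obtain ⟨a, ha⟩ := HeightOneSpectrum.exists_valuation_sub_lt_of_integer V hcv 1
  refine ⟨a, ?_⟩
  rw [← HeightOneSpectrum.valuedAdicCompletion_eq_valuation'] at ha
  change Valued.v (algebraMap K (V.adicCompletion K) (algebraMap (𝓞 K) K a - c)) < 1 at ha
  rw [map_sub, ← IsScalarTower.algebraMap_apply] at ha
  have : algebraMap (𝓞 K) (V.adicCompletion K) a - u =
    (algebraMap (𝓞 K) (V.adicCompletion K) a - algebraMap K (V.adicCompletion K) c) +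
    (algebraMap K (V.adicCompletion K) c - u) := by ring
  rw [this]
  exact (Valuation.map_add _ _ _).trans_lt (max_lt ha hc)

/-- Lemma 2.3, case `q ∤ α`: if `A ∈ ℤ ∖ {0, ±1}` is cube-free,
`α ∈ ℤ[ζ₃]` is a nonzero cube-free integer, and `q` is a prime of `ℤ[ζ₃]` with `q ‖ A`,
`q ∤ 3` and `q ∤ α`, then `C_{A,α}(k_q) ≠ ∅` iff the image of `α` in the residue field
`ℤ[ζ₃]/(q)` is a nonzero cube. -/
theorem stmt2 (K : Type*) [Field K] [NumberField K] [IsCyclotomicExtension {3} ℚ K]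
    (A : ℤ) (hA0 : A ≠ 0) (hA1 : A ≠ 1) (hA1' : A ≠ -1)
    (hAcf : ∀ p : ℤ, Prime p → ¬ p ^ 3 ∣ A)
    (α : 𝓞 K) (hα0 : α ≠ 0) (hαcf : ∀ p : 𝓞 K, Prime p → ¬ p ^ 3 ∣ α)
    (q : 𝓞 K) (hq : Prime q)
    (hqA : q ∣ (A : 𝓞 K)) (hqA2 : ¬ q ^ 2 ∣ (A : 𝓞 K))
    (hq3 : ¬ q ∣ (3 : 𝓞 K)) (hqα : ¬ q ∣ α) :
    (∃ x y z : (primeSpec hq).adicCompletion K,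
        ¬(x = 0 ∧ y = 0 ∧ z = 0) ∧
        algebraMap (𝓞 K) ((primeSpec hq).adicCompletion K) α * x ^ 3
          + (algebraMap (𝓞 K) ((primeSpec hq).adicCompletion K) α)⁻¹ * y ^ 3
          = algebraMap K ((primeSpec hq).adicCompletion K) (A : K) * z ^ 3)
      ↔ ∃ c : 𝓞 K ⧸ Ideal.span {q}, c ≠ 0 ∧
          Ideal.Quotient.mk (Ideal.span {q}) α = c ^ 3 := by
  have hvint : ∀ x : 𝓞 K, Valued.v (algebraMap (𝓞 K) ((primeSpec hq).adicCompletion K) x)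
      = (primeSpec hq).intValuation x := fun x => by
    rw [← HeightOneSpectrum.valuation_of_algebraMap (K := K)]
    exact HeightOneSpectrum.valuedAdicCompletion_eq_valuation _ x
  have hAmap : algebraMap K ((primeSpec hq).adicCompletion K) (A : K) =
      algebraMap (𝓞 K) ((primeSpec hq).adicCompletion K) (A : 𝓞 K) := by simp
  rw [hAmap]
  constructor
  · rintro ⟨x, y, z, hne, heq⟩
    have hvα : Valued.v (algebraMap (𝓞 K) ((primeSpec hq).adicCompletion K) α) = 1 := by
      rw [hvint, HeightOneSpectrum.intValuation_eq_one_iff]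
      exact fun h => hqα (Ideal.mem_span_singleton.1 h)
    have hvA : Valued.v (algebraMap (𝓞 K) ((primeSpec hq).adicCompletion K) (A : 𝓞 K))
        = WithZero.exp (-1 : ℤ) := by
      obtain ⟨B, hB⟩ := hqA
      have hqB : ¬ q ∣ B := by
        rintro ⟨C, rfl⟩
        exact hqA2 ⟨C, by rw [hB]; ring⟩
      rw [hvint, hB, map_mul, HeightOneSpectrum.intValuation_singleton _ hq.ne_zero rfl,
        HeightOneSpectrum.intValuation_eq_one_iff.2
          (fun h => hqB (Ideal.mem_span_singleton.1 h)), mul_one]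
    have hlt := (HeightOneSpectrum.intValuation_lt_one_iff_mem (primeSpec hq))
    generalize hφ : algebraMap (𝓞 K) ((primeSpec hq).adicCompletion K) = φ at *
    have hφα : φ α ≠ 0 := by
      intro h
      rw [h, map_zero] at hvα
      exact zero_ne_one hvα
    have hv1 : Valued.v (φ α * x ^ 3) = Valued.v x ^ 3 := by simp [hvα]
    have hv2 : Valued.v ((φ α)⁻¹ * y ^ 3) = Valued.v y ^ 3 := by simp [hvα]
    have hv3 : Valued.v (φ (A : 𝓞 K) * z ^ 3) = WithZero.exp (-1 : ℤ) * Valued.v z ^ 3 := by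
      rw [map_mul, map_pow, hvA]
    have hxy : Valued.v x ^ 3 = Valued.v y ^ 3 := by
      rcases lt_trichotomy (Valued.v x ^ 3) (Valued.v y ^ 3) with h | h | h
      · exfalso
        have := Valuation.map_add_eq_of_lt_left Valued.v (hv1.trans_lt (h.trans_eq hv2.symm))
        rw [add_comm, heq, hv3, hv2] at this
        rw [aux_val this.symm] at h
        simp at h
      · exact h
      · exfalso
        have := Valuation.map_add_eq_of_lt_right Valued.v (hv2.trans_lt (h.trans_eq hv1.symm))
        rw [add_comm, heq, hv3, hv1] at this
        rw [aux_val this.symm] at h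
        simp at h
    have hA0' : φ (A : 𝓞 K) ≠ 0 := by
      intro h
      rw [h, map_zero] at hvA
      exact WithZero.exp_ne_zero hvA.symm
    have hx : x ≠ 0 := by
      rintro rfl
      have hy : y = 0 := by simpa using hxy.symm
      subst hy
      apply hne
      have h0 : φ (A : 𝓞 K) * z ^ 3 = 0 := by rw [← heq]; ring
      exact ⟨rfl, rfl, pow_eq_zero_iff (by norm_num) |>.1 ((mul_eq_zero.1 h0).resolve_left hA0')⟩
    have hx' : Valued.v x ≠ 0 := by simpa using hx
    have hlt3 : Valued.v (φ α * x ^ 3 + (φ α)⁻¹ * y ^ 3) < Valued.v x ^ 3 := by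
      refine lt_of_le_of_ne ?_ ?_
      · refine (Valuation.map_add _ _ _).trans ?_
        rw [hv1, hv2, ← hxy, max_self]
      · rw [heq, hv3]
        exact fun h => hx' (aux_val h.symm)
    have hu3 : Valued.v (-y / x) ^ 3 = 1 := by
      rw [map_div₀, Valuation.map_neg, div_pow, ← hxy]
      exact div_self (pow_ne_zero _ hx')
    have hu : Valued.v (-y / x) = 1 := by
      exact (pow_eq_one_iff.1 hu3).resolve_right (by norm_num)
    have hau : Valued.v (φ α ^ 2 - (-y / x) ^ 3) < 1 := by
      have : φ α ^ 2 - (-y / x) ^ 3 = φ α * (φ α * x ^ 3 + (φ α)⁻¹ * y ^ 3) / x ^ 3 := by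
        field_simp
        ring
      rw [this, map_div₀, map_mul, hvα, one_mul, map_pow]
      exact (div_lt_one₀ (pow_pos (zero_lt_iff.2 hx') 3)).2 hlt3
    obtain ⟨a, ha⟩ := aux_approx (primeSpec hq) (-y / x) hu.le
    rw [hφ] at ha
    generalize -y / x = u at *
    have hva : Valued.v (φ a) = 1 := by
      rw [← hu]
      exact Valuation.map_eq_of_sub_lt _ (by rwa [hu])
    have hfin : Valued.v (φ (α ^ 2 - a ^ 3)) < 1 := by
      have : φ (α ^ 2 - a ^ 3) = (φ α ^ 2 - u ^ 3)
          + -((φ a - u) * (φ a ^ 2 + φ a * u + u ^ 2)) := by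
        rw [map_sub, map_pow, map_pow]; ring
      rw [this]
      refine (Valuation.map_add _ _ _).trans_lt (max_lt hau ?_)
      rw [Valuation.map_neg, map_mul]
      refine mul_lt_one_of_lt_of_le ha ?_
      refine (Valuation.map_add _ _ _).trans (max_le ((Valuation.map_add _ _ _).trans
        (max_le ?_ ?_)) ?_) <;> simp [hva, hu]
    rw [hvint, hlt] at hfin
    have hqa : ¬ q ∣ a := by
      intro h
      have := (hlt a).2 (Ideal.mem_span_singleton.2 h)
      rw [← hvint, hva] at this
      exact lt_irrefl _ this
    obtain ⟨w, m, hw⟩ := aux_inv hq hqa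
    obtain ⟨t, ht⟩ := Ideal.mem_span_singleton.1 hfin
    have key : Ideal.Quotient.mk (Ideal.span {q}) α =
        (Ideal.Quotient.mk (Ideal.span {q}) (α * w)) ^ 3 := by
      have e1 : Ideal.Quotient.mk (Ideal.span {q}) q = 0 :=
        Ideal.Quotient.eq_zero_iff_mem.2 (Ideal.mem_span_singleton_self q)
      have e2 := congrArg (Ideal.Quotient.mk (Ideal.span {q})) ht
      have e3 := congrArg (Ideal.Quotient.mk (Ideal.span {q})) hw
      simp only [map_mul, map_add, map_sub, map_pow, map_one, e1, zero_mul, add_zero] at e2 e3 ⊢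
      generalize Ideal.Quotient.mk (Ideal.span {q}) α = α' at *
      generalize Ideal.Quotient.mk (Ideal.span {q}) a = a' at *
      generalize Ideal.Quotient.mk (Ideal.span {q}) w = w' at *
      linear_combination (-α' * w' ^ 3) * e2 - α' * (1 + a' * w' + a' ^ 2 * w' ^ 2) * e3
    refine ⟨_, ?_, key⟩
    intro h
    rw [h, zero_pow (by norm_num), Ideal.Quotient.eq_zero_iff_mem,
      Ideal.mem_span_singleton] at key
    exact hqα key
  · rintro ⟨c, hc, hαc⟩
    obtain ⟨a, rfl⟩ := Ideal.Quotient.mk_surjective c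
    have hqa : ¬ q ∣ a := fun h => hc
      (Ideal.Quotient.eq_zero_iff_mem.2 (Ideal.mem_span_singleton.2 h))
    have hd : q ∣ a ^ 3 - α := by
      rw [← Ideal.mem_span_singleton, ← Ideal.Quotient.eq, hαc, map_pow]
    obtain ⟨g, hg⟩ := aux_cube hq hq3 a hqa hd
    refine ⟨1, -g ^ 2, 0, by simp, ?_⟩
    have hφα : algebraMap (𝓞 K) ((primeSpec hq).adicCompletion K) α ≠ 0 := by
      intro h
      have := hvint α
      rw [h, map_zero] at this
      exact HeightOneSpectrum.intValuation_ne_zero _ _ hα0 this.symm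
    rw [← hg] at hφα ⊢
    field_simp
    ring
end

section
/- Let A ∈ ℤ∖{0,±1} be a cube-free integer, let α ∈ ℤ[ζ₃] be a nonzero cube-free integer, and let q be a prime element of ℤ[ζ₃] such that q‖A (q divides A but q² does not), q does not divide 3, and q‖α (q divides α but q² does not). Then C_{A,α}(k_q) ≠ ∅ if and only if the image of (A/q)·(α/q)⁻¹ in the residue field 𝔽_q = ℤ[ζ₃]/(q) is a cube; equivalently, there exists β ∈ ℤ[ζ₃] with A/q ≡ β³·(α/q) (mod q). -/
open NumberField IsDedekindDomain

lemma cube_root_aux {L : Type*} [NormedField L] [CompleteSpace L] [IsUltrametricDist L] (c g : L)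
    (h3 : ‖(3 : L)‖ = 1) (hg : ‖g‖ = 1) (h : ‖g ^ 3 - c‖ < 1) : ∃ x : L, x ^ 3 = c := by
  have ult : ∀ (a b : L) (r : ℝ), ‖a‖ ≤ r → ‖b‖ ≤ r → ‖a + b‖ ≤ r := fun a b r ha hb =>
    (IsUltrametricDist.norm_add_le_max a b).trans (max_le ha hb)
  set r : ℝ := ‖g ^ 3 - c‖ with hr
  have hr0 : 0 ≤ r := norm_nonneg _
  have hg0 : g ≠ 0 := by rintro rfl; simp at hg
  have h30 : (3 : L) ≠ 0 := by intro h; rw [h] at h3; simp at h3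
  let T : L → L := fun x => x - (x ^ 3 - c) / (3 * g ^ 2)
  have hden : ‖3 * g ^ 2‖ = 1 := by simp [h3, hg]
  have hball : ∀ x ∈ Metric.closedBall g r, ‖x - g‖ ≤ r ∧ ‖x‖ ≤ 1 := by
    intro x hx
    have h1 : ‖x - g‖ ≤ r := by simpa [dist_eq_norm] using hx
    refine ⟨h1, ?_⟩
    have := ult (x - g) g 1 (h1.trans h.le) hg.le
    simpa using this
  have hmul : ∀ (a b : L), ‖a‖ ≤ r → ‖b‖ ≤ 1 → ‖a * b‖ ≤ r := by
    intro a b ha hb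
    rw [norm_mul]
    calc ‖a‖ * ‖b‖ ≤ r * 1 := by gcongr
      _ = r := mul_one r
  have hmul1 : ∀ (a b : L), ‖a‖ ≤ 1 → ‖b‖ ≤ 1 → ‖a * b‖ ≤ 1 := by
    intro a b ha hb
    rw [norm_mul]
    exact mul_le_one₀ ha (norm_nonneg _) hb
  have hmaps : Set.MapsTo T (Metric.closedBall g r) (Metric.closedBall g r) := by
    intro x hx
    obtain ⟨h1, h2⟩ := hball x hx
    rw [Metric.mem_closedBall, dist_eq_norm]
    have e : T x - g = (x - g) + -(((x - g) * (x * x + (x * g + g * g)) + (g ^ 3 - c)) / (3 * g ^ 2)) := by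
      simp only [T]; ring
    rw [e]
    refine ult _ _ _ h1 ?_
    rw [norm_neg, norm_div, hden, div_one]
    refine ult _ _ _ (hmul _ _ h1 ?_) le_rfl
    exact ult _ _ _ (hmul1 _ _ h2 h2) (ult _ _ _ (hmul1 _ _ h2 hg.le) (hmul1 _ _ hg.le hg.le))
  have hlip : ContractingWith ⟨r, hr0⟩ (hmaps.restrict T _ _) := by
    refine ⟨by exact_mod_cast h, LipschitzWith.of_dist_le_mul ?_⟩
    rintro ⟨x, hx⟩ ⟨y, hy⟩
    obtain ⟨hx1, hx2⟩ := hball x hx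
    obtain ⟨hy1, hy2⟩ := hball y hy
    rw [Subtype.dist_eq, Subtype.dist_eq]
    simp only [Set.MapsTo.val_restrict_apply, dist_eq_norm]
    have e : T x - T y = (((x - g) * (-(g + x)) + ((x - g) * (-y) + (y - g) * (-g))
        + (y - g) * (-(g + y))) / (3 * g ^ 2)) * (x - y) := by
      simp only [T]; field_simp; ring
    rw [e, norm_mul, norm_div, hden, div_one]
    change _ ≤ r * ‖x - y‖
    gcongr
    refine ult _ _ _ (ult _ _ _ (hmul _ _ hx1 ?_) (ult _ _ _ (hmul _ _ hx1 ?_) (hmul _ _ hy1 ?_)))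
      (hmul _ _ hy1 ?_)
    · rw [norm_neg]; exact ult _ _ _ hg.le hx2
    · rwa [norm_neg]
    · rw [norm_neg]; exact hg.le
    · rw [norm_neg]; exact ult _ _ _ hg.le hy2
  obtain ⟨y, -, hy, -⟩ := hlip.exists_fixedPoint' Metric.isClosed_closedBall.isComplete hmaps
    (Metric.mem_closedBall_self hr0) (edist_ne_top _ _)
  refine ⟨y, ?_⟩
  have hy' : y - (y ^ 3 - c) / (3 * g ^ 2) = y := hy
  have h5 : (y ^ 3 - c) / (3 * g ^ 2) = 0 := by linear_combination -hy'
  rw [div_eq_zero_iff] at h5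
  rcases h5 with h5 | h5
  · linear_combination h5
  · rw [h5] at hden; simp at hden

lemma val_aux_s3 {L : Type*} [Field L] (v : Valuation L (WithZero (Multiplicative ℤ)))
    (q b w y : L) (hq : v q = WithZero.exp (-1 : ℤ)) (hb : v b = 1) (hw : w ≠ 0)
    (D : L) (hD : v D = v w ^ 3) (h : y ^ 3 = q ^ 2 * b * D) : False := by
  have h1 := congrArg v h
  simp only [map_pow, map_mul, hq, hb, hD, mul_one] at h1
  have hw' : v w ≠ 0 := by simpa using hw
  have hy' : v y ≠ 0 := by
    intro h0
    rw [h0] at h1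
    simp [hw'] at h1
  rw [← WithZero.exp_log hw', ← WithZero.exp_log hy'] at h1
  simp only [← WithZero.exp_nsmul, ← WithZero.exp_add, WithZero.exp_inj] at h1
  simp at h1
  omega

lemma forward_aux {L : Type*} [Field L] (v : Valuation L (WithZero (Multiplicative ℤ)))
    (q b B x y z : L) (hq : v q = WithZero.exp (-1 : ℤ)) (hb : v b = 1) (hB : v B = 1)
    (hne : ¬ (x = 0 ∧ y = 0 ∧ z = 0))
    (h : q * b * x ^ 3 + (q * b)⁻¹ * y ^ 3 = q * B * z ^ 3) :
    ∃ t : L, v t ≤ 1 ∧ v (B - b * t ^ 3) < 1 := by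
  have hq0 : q ≠ 0 := by rintro rfl; rw [map_zero] at hq; exact WithZero.exp_ne_zero hq.symm
  have hb0 : b ≠ 0 := by rintro rfl; simp at hb
  have hy : y ^ 3 = q ^ 2 * b * (B * z ^ 3 - b * x ^ 3) := by
    field_simp at h
    linear_combination h
  have hBz : v (B * z ^ 3) = v z ^ 3 := by simp [hB]
  have hbx : v (b * x ^ 3) = v x ^ 3 := by simp [hb]
  rcases lt_trichotomy (v x) (v z) with hlt | heq | hlt
  · exfalso
    have hz : z ≠ 0 := by rintro rfl; simp at hlt
    refine val_aux_s3 v q b z y hq hb hz _ ?_ hy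
    rw [Valuation.map_sub_eq_of_lt_left, hBz]
    rw [hBz, hbx]
    exact pow_lt_pow_left₀ hlt zero_le (by norm_num)
  · by_cases hz : z = 0
    · subst hz
      have hx : x = 0 := by simpa using heq
      subst hx
      simp at hy
      simp [hy] at hne
    · have hz' : v z ≠ 0 := by simpa using hz
      have ht : v (x / z) = 1 := by rw [map_div₀, heq, div_self hz']
      refine ⟨x / z, ht.le, lt_of_le_of_ne ?_ ?_⟩
      · refine (v.map_sub _ _).trans ?_
        simp only [map_mul, map_pow, ht, hb, hB]
        simp
      · intro h1
        refine val_aux_s3 v q b 1 (y / z) hq hb one_ne_zero (B - b * (x / z) ^ 3) (by simp [h1]) ?_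
        field_simp
        linear_combination hy
  · exfalso
    have hx : x ≠ 0 := by rintro rfl; simp at hlt
    refine val_aux_s3 v q b x y hq hb hx _ ?_ hy
    rw [Valuation.map_sub_eq_of_lt_right, hbx]
    rw [hBz, hbx]
    exact pow_lt_pow_left₀ hlt zero_le (by norm_num)

lemma approx_aux (K : Type*) [Field K] [NumberField K] (v : HeightOneSpectrum (𝓞 K))
    (t : v.adicCompletion K) (ht : Valued.v t ≤ 1) :
    ∃ γ : 𝓞 K, Valued.v (algebraMap (𝓞 K) (v.adicCompletion K) γ - t) < 1 := by
  have hn : {y : v.adicCompletion K | Valued.v (y - t) < 1} ∈ nhds t := by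
    rw [Valued.mem_nhds]
    refine ⟨1, fun y hy => ?_⟩
    simpa using hy
  obtain ⟨k, hk⟩ := (HeightOneSpectrum.denseRange_algebraMap K v).exists_mem_open isOpen_interior
    ⟨t, mem_interior_iff_mem_nhds.mpr hn⟩
  have hk : Valued.v (algebraMap K (v.adicCompletion K) k - t) < 1 := by
    have h0 := interior_subset (s := {y : v.adicCompletion K | Valued.v (y - t) < 1}) hk
    exact h0
  have hval : ∀ k : K, Valued.v (algebraMap K (v.adicCompletion K) k) = v.valuation K k :=
    fun k => HeightOneSpectrum.valuedAdicCompletion_eq_valuation' v k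
  have hk1 : v.valuation K k ≤ 1 := by
    rw [← hval]
    have := (Valued.v : Valuation (v.adicCompletion K) _).map_add
      (algebraMap K (v.adicCompletion K) k - t) t
    rw [sub_add_cancel] at this
    exact this.trans (max_le hk.le ht)
  obtain ⟨γ, hγ⟩ := HeightOneSpectrum.exists_valuation_sub_lt_of_integer v hk1 1
  refine ⟨γ, ?_⟩
  rw [← hval, map_sub] at hγ
  rw [IsScalarTower.algebraMap_apply (𝓞 K) K (v.adicCompletion K)]
  have e : algebraMap K (v.adicCompletion K) (algebraMap (𝓞 K) K γ) - t =
    (algebraMap K (v.adicCompletion K) (algebraMap (𝓞 K) K γ) - algebraMap K (v.adicCompletion K) k)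
      + (algebraMap K (v.adicCompletion K) k - t) := by ring
  rw [e]
  exact Valuation.map_add_lt _ (by simpa using hγ) hk

/-- Lemma 2.3, case `q ‖ α`: if `A ∈ ℤ ∖ {0, ±1}` is cube-free,
`α ∈ ℤ[ζ₃]` is a nonzero cube-free integer, and `q` is a prime of `ℤ[ζ₃]` with `q ‖ A`,
`q ∤ 3` and `q ‖ α`, say `A = q·B` and `α = q·β` with `q ∤ B`, `q ∤ β`, then
`C_{A,α}(k_q) ≠ ∅` iff the image of `(A/q)·(α/q)⁻¹` in the residue field `ℤ[ζ₃]/(q)` is a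
cube, i.e. iff `B ≡ γ³·β (mod q)` for some `γ ∈ ℤ[ζ₃]`. -/
theorem stmt3 (K : Type*) [Field K] [NumberField K] [IsCyclotomicExtension {3} ℚ K]
    (A : ℤ) (hA0 : A ≠ 0) (hA1 : A ≠ 1) (hA1' : A ≠ -1)
    (hAcf : ∀ p : ℤ, Prime p → ¬ p ^ 3 ∣ A)
    (α : 𝓞 K) (hα0 : α ≠ 0) (hαcf : ∀ p : 𝓞 K, Prime p → ¬ p ^ 3 ∣ α)
    (q : 𝓞 K) (hq : Prime q) (hq3 : ¬ q ∣ (3 : 𝓞 K))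
    (B β : 𝓞 K)
    (hAB : (A : 𝓞 K) = q * B) (hqB : ¬ q ∣ B)
    (hαβ : α = q * β) (hqβ : ¬ q ∣ β) :
    (∃ x y z : (primeSpec hq).adicCompletion K,
        ¬(x = 0 ∧ y = 0 ∧ z = 0) ∧
        algebraMap (𝓞 K) ((primeSpec hq).adicCompletion K) α * x ^ 3
          + (algebraMap (𝓞 K) ((primeSpec hq).adicCompletion K) α)⁻¹ * y ^ 3
          = algebraMap K ((primeSpec hq).adicCompletion K) (A : K) * z ^ 3)
      ↔ ∃ γ : 𝓞 K, q ∣ B - γ ^ 3 * β := by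
  have hval : ∀ r : 𝓞 K, Valued.v (algebraMap (𝓞 K) ((primeSpec hq).adicCompletion K) r) =
      (primeSpec hq).intValuation r := by
    intro r
    rw [← HeightOneSpectrum.valuation_of_algebraMap (K := K)]
    exact HeightOneSpectrum.valuedAdicCompletion_eq_valuation (primeSpec hq) r
  have hdvd : ∀ r : 𝓞 K,
      Valued.v (algebraMap (𝓞 K) ((primeSpec hq).adicCompletion K) r) < 1 ↔ q ∣ r := by
    intro r
    rw [hval, HeightOneSpectrum.intValuation_lt_one_iff_mem]
    exact Ideal.mem_span_singleton
  have hle : ∀ r : 𝓞 K, Valued.v (algebraMap (𝓞 K) ((primeSpec hq).adicCompletion K) r) ≤ 1 := by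
    intro r
    rw [hval]
    exact HeightOneSpectrum.intValuation_le_one _ _
  have hone : ∀ r : 𝓞 K, ¬ q ∣ r →
      Valued.v (algebraMap (𝓞 K) ((primeSpec hq).adicCompletion K) r) = 1 := fun r hr =>
    le_antisymm (hle r) (not_lt.mp fun h => hr ((hdvd r).mp h))
  have hvq : Valued.v (algebraMap (𝓞 K) ((primeSpec hq).adicCompletion K) q) =
      WithZero.exp (-1 : ℤ) := by
    rw [hval]
    exact HeightOneSpectrum.intValuation_singleton _ hq.ne_zero rfl
  have hA : algebraMap K ((primeSpec hq).adicCompletion K) (A : K) =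
      algebraMap (𝓞 K) ((primeSpec hq).adicCompletion K) q *
      algebraMap (𝓞 K) ((primeSpec hq).adicCompletion K) B := by
    rw [← map_mul, ← hAB, map_intCast, map_intCast]
  rw [hA, hαβ, map_mul]
  constructor
  · rintro ⟨x, y, z, hne, h⟩
    obtain ⟨t, ht, h1⟩ := forward_aux Valued.v _ _ _ x y z hvq (hone β hqβ) (hone B hqB) hne h
    obtain ⟨γ, hγ⟩ := approx_aux K _ t ht
    refine ⟨γ, (hdvd _).mp ?_⟩
    simp only [map_sub, map_mul, map_pow]
    set g := algebraMap (𝓞 K) ((primeSpec hq).adicCompletion K) γ with hg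
    set b := algebraMap (𝓞 K) ((primeSpec hq).adicCompletion K) β with hb
    set B' := algebraMap (𝓞 K) ((primeSpec hq).adicCompletion K) B with hB'
    have e : B' - g ^ 3 * b = (B' - b * t ^ 3) + (g - t) * (-(b * (g ^ 2 + g * t + t ^ 2))) := by
      ring
    rw [e]
    refine Valuation.map_add_lt _ h1 ?_
    rw [map_mul]
    refine mul_lt_one_of_lt_of_le hγ ?_
    rw [Valuation.map_neg, map_mul]
    refine mul_le_one' (hle β) ?_
    refine Valuation.map_add_le _ (Valuation.map_add_le _ ?_ ?_) ?_
    · rw [map_pow]; exact pow_le_one' (hle γ) 2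
    · rw [map_mul]; exact mul_le_one' (hle γ) ht
    · rw [map_pow]; exact pow_le_one' ht 2
  · rintro ⟨γ, hγ⟩
    have hqγ : ¬ q ∣ γ := by
      intro hd
      apply hqB
      have h2 : q ∣ γ ^ 3 * β := (hd.trans (dvd_pow_self γ (by norm_num))).mul_right β
      have := dvd_add hγ h2
      rwa [sub_add_cancel] at this
    have hvb := hone β hqβ
    set b := algebraMap (𝓞 K) ((primeSpec hq).adicCompletion K) β with hb
    set g := algebraMap (𝓞 K) ((primeSpec hq).adicCompletion K) γ with hg
    set B' := algebraMap (𝓞 K) ((primeSpec hq).adicCompletion K) B with hB'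
    have hb0 : b ≠ 0 := by intro h0; rw [h0] at hvb; simp at hvb
    have hnorm : ∀ x : (primeSpec hq).adicCompletion K, Valued.v x = 1 → ‖x‖ = 1 := by
      intro x hx
      rw [FinitePlace.norm_def, hx, map_one, NNReal.coe_one]
    have h1 : Valued.v (g ^ 3 - B' / b) < 1 := by
      have e : g ^ 3 - B' / b = -((B' - g ^ 3 * b) / b) := by field_simp; ring
      rw [e, Valuation.map_neg, map_div₀, hvb, div_one]
      have := (hdvd _).mpr hγ
      simpa only [map_sub, map_mul, map_pow] using this
    have h3 : Valued.v (3 : (primeSpec hq).adicCompletion K) = 1 := by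
      have := hone 3 hq3
      rwa [map_ofNat] at this
    obtain ⟨x, hx⟩ := cube_root_aux (B' / b) g (hnorm _ h3) (hnorm _ (hone γ hqγ))
      (Valued.toNormedField.norm_lt_one_iff.mpr h1)
    refine ⟨x, 0, 1, by simp, ?_⟩
    rw [hx, zero_pow (by norm_num), mul_zero, add_zero, one_pow, mul_one, mul_assoc,
      mul_div_cancel₀ _ hb0]
end

section
/- Let A ∈ ℤ∖{0,±1} be a cube-free integer, let α ∈ ℤ[ζ₃] be a nonzero cube-free integer, and let q be a prime element of ℤ[ζ₃] such that q‖A (q divides A but q² does not), q does not divide 3, and q²‖α (q² divides α but q³ does not). Then C_{A,α}(k_q) ≠ ∅ if and only if the image of (A/q)·(α/q²) in the residue field 𝔽_q = ℤ[ζ₃]/(q) is a cube in 𝔽_q. -/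
open NumberField IsDedekindDomain

section aux
variable {R : Type*} [CommRing R] [IsDomain R] [IsDedekindDomain R] {K : Type*} [Field K]
  [Algebra R K] [IsFractionRing R K] (v : HeightOneSpectrum R)

lemma aux_val_alg (r : R) :
    Valued.v (algebraMap R (v.adicCompletion K) r) = v.intValuation r := by
  rw [← v.valuation_of_algebraMap (K := K)]
  exact v.valuedAdicCompletion_eq_valuation r

lemma aux_approx_s4 (t : v.adicCompletion K) (ht : Valued.v t ≤ 1) :
    ∃ a : R, Valued.v (algebraMap R (v.adicCompletion K) a - t) < 1 := by
  have hopen : {x : v.adicCompletion K | Valued.v (x - t) < 1} ∈ nhds t := by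
    rw [Valued.mem_nhds]
    refine ⟨1, fun x hx => ?_⟩
    have hx' : Valued.v.restrict (x - t) < 1 := hx
    rwa [Valuation.restrict_lt_one_iff] at hx'
  obtain ⟨k, hk⟩ := (HeightOneSpectrum.denseRange_algebraMap K v).mem_nhds hopen
  have hk : Valued.v (algebraMap K (v.adicCompletion K) k - t) < 1 := hk
  have hk1 : v.valuation K k ≤ 1 := by
    rw [← v.valuedAdicCompletion_eq_valuation']
    change Valued.v (algebraMap K (v.adicCompletion K) k) ≤ 1
    have : algebraMap K (v.adicCompletion K) k
      = (algebraMap K (v.adicCompletion K) k - t) + t := by ring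
    rw [this]
    exact Valuation.map_add_le _ hk.le ht
  obtain ⟨a, ha⟩ := v.exists_valuation_sub_lt_of_integer hk1 1
  refine ⟨a, ?_⟩
  have e : algebraMap R (v.adicCompletion K) a - t =
    algebraMap K (v.adicCompletion K) (algebraMap R K a - k)
      + (algebraMap K (v.adicCompletion K) k - t) := by
    rw [map_sub, ← IsScalarTower.algebraMap_apply]; ring
  rw [e]
  refine Valuation.map_add_lt _ ?_ hk
  have := v.valuedAdicCompletion_eq_valuation' (algebraMap R K a - k)
  exact (this.trans_lt ha)

lemma aux_val_q {q : R} (hq : Prime q) : (primeSpec hq).intValuation q = WithZero.exp (-1 : ℤ) :=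
  (primeSpec hq).intValuation_singleton hq.ne_zero rfl

lemma aux_mem_pow {q : R} (hq : Prime q) (n : ℕ) (x : (primeSpec hq).adicCompletionIntegers K) :
    x ∈ Ideal.span {algebraMap R ((primeSpec hq).adicCompletionIntegers K) q} ^ n ↔
      Valued.v (x : (primeSpec hq).adicCompletion K) ≤
        Valued.v (algebraMap R ((primeSpec hq).adicCompletion K) (q ^ n)) := by
  rw [Ideal.span_singleton_pow, Ideal.mem_span_singleton, ← map_pow]
  have := (HeightOneSpectrum.adicCompletionIntegers.integers (K := K) (primeSpec hq)).dvd_iff_le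
    (x := algebraMap R ((primeSpec hq).adicCompletionIntegers K) (q ^ n)) (y := x)
  rw [this]
  rfl

lemma aux_adic {q : R} (hq : Prime q) :
    IsAdicComplete (Ideal.span {algebraMap R ((primeSpec hq).adicCompletionIntegers K) q})
      ((primeSpec hq).adicCompletionIntegers K) := by
  have : IsTopologicalRing ((primeSpec hq).adicCompletionIntegers K) :=
    inferInstanceAs
      (IsTopologicalRing ((primeSpec hq).adicCompletionIntegers K).toSubring)
  have : IsUniformAddGroup ((primeSpec hq).adicCompletionIntegers K) :=
    inferInstanceAs
      (IsUniformAddGroup ((primeSpec hq).adicCompletionIntegers K).toSubring.toAddSubgroup)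
  have hadic : IsAdic
      (Ideal.span {algebraMap R ((primeSpec hq).adicCompletionIntegers K) q}) := by
    rw [isAdic_iff]
    constructor
    · intro n
      have h0 : Valued.v.restrict
          (algebraMap R ((primeSpec hq).adicCompletion K) (q ^ n)) ≠ 0 := by
        rw [Ne, Valuation.restrict_eq_zero_iff, aux_val_alg, map_pow, aux_val_q]
        simp
      have := (Valued.isOpen_closedBall ((primeSpec hq).adicCompletion K) h0).preimage
        (continuous_subtype_val (p := (· ∈ (primeSpec hq).adicCompletionIntegers K)))
      convert this using 1
      ext x
      simp only [SetLike.mem_coe, Set.mem_preimage, aux_mem_pow, Set.mem_ofPred_eq,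
        Valuation.restrict_le_iff]
    · intro s hs
      rw [nhds_subtype_eq_comap, Filter.mem_comap] at hs
      obtain ⟨t, ht, hts⟩ := hs
      change t ∈ nhds 0 at ht
      obtain ⟨γ, hγ⟩ := Valued.mem_nhds_zero.1 ht
      have hy0 : MonoidWithZeroHom.ValueGroup₀.embedding γ.1 ≠ 0 := by simp
      obtain ⟨n, hn, -⟩ := WithZero.exists_exp_neg_natCast_lt_and_lt hy0 hy0
      refine ⟨n, fun x hx => hts (hγ ?_)⟩
      rw [SetLike.mem_coe, aux_mem_pow] at hx
      change Valued.v.restrict (x : (primeSpec hq).adicCompletion K) < γ.1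
      refine (MonoidWithZeroHom.ValueGroup₀.embedding_strictMono.lt_iff_lt).1 ?_
      rw [Valuation.embedding_restrict]
      refine hx.trans_lt (lt_of_eq_of_lt ?_ hn)
      rw [aux_val_alg, map_pow, aux_val_q, ← WithZero.exp_nsmul]
      simp
  rw [hadic.isAdicComplete_iff]
  refine ⟨?_, inferInstance⟩
  exact (Valued.isClosed_valuationSubring ((primeSpec hq).adicCompletion K)).completeSpace_coe

lemma aux_hensel {q : R} (hq : Prime q) (h3 : ¬ q ∣ 3) (b c : R) (hb : ¬ q ∣ b)
    (h : q ∣ b - c ^ 3) :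
    ∃ t : (primeSpec hq).adicCompletion K, t ^ 3 = algebraMap R _ b := by
  have hc : ¬ q ∣ c := fun hc => hb (by
    have := dvd_add h (dvd_pow hc three_ne_zero)
    simpa using this)
  have := aux_adic (K := K) hq
  obtain ⟨a, ha, -⟩ := HenselianRing.is_henselian
    (I := Ideal.span {algebraMap R ((primeSpec hq).adicCompletionIntegers K) q})
    (Polynomial.X ^ 3 - Polynomial.C (algebraMap R ((primeSpec hq).adicCompletionIntegers K) b))
    (Polynomial.monic_X_pow_sub_C _ three_ne_zero)
    (algebraMap R ((primeSpec hq).adicCompletionIntegers K) c)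
    (by
      rw [Ideal.mem_span_singleton]
      simp only [Polynomial.eval_sub, Polynomial.eval_pow, Polynomial.eval_X, Polynomial.eval_C,
        ← map_pow, ← map_sub]
      apply map_dvd
      rw [← dvd_neg]; simpa using h)
    (by
      apply IsUnit.map
      have e : Polynomial.eval (algebraMap R ((primeSpec hq).adicCompletionIntegers K) c)
        (Polynomial.derivative (Polynomial.X ^ 3 -
          Polynomial.C (algebraMap R ((primeSpec hq).adicCompletionIntegers K) b)))
          = algebraMap R ((primeSpec hq).adicCompletionIntegers K) (3 * c ^ 2) := by
        rw [map_mul, map_pow, map_ofNat]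
        simp
        left; norm_num
      rw [e, HeightOneSpectrum.adicCompletionIntegers.isUnit_iff_valued_eq_one]
      change Valued.v (algebraMap R ((primeSpec hq).adicCompletion K) (3 * c ^ 2)) = 1
      rw [aux_val_alg, HeightOneSpectrum.intValuation_eq_one_iff]
      change _ ∉ Ideal.span {q}
      rw [Ideal.mem_span_singleton]
      intro h
      exact (hq.dvd_or_dvd h).elim h3 fun h => hc (hq.dvd_of_dvd_pow h))
  refine ⟨a, ?_⟩
  simp only [Polynomial.IsRoot, Polynomial.eval_sub, Polynomial.eval_pow, Polynomial.eval_X,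
    Polynomial.eval_C, sub_eq_zero] at ha
  exact congrArg Subtype.val ha

lemma aux_wz (s t : WithZero (Multiplicative ℤ)) (hs : s ≠ 0) :
    WithZero.exp (-1 : ℤ) * s ^ 3 ≠ t ^ 3 := by
  intro h
  by_cases ht : t = 0
  · subst ht; simp at h; exact hs h
  have := congrArg WithZero.log h
  rw [WithZero.log_mul (by simp) (pow_ne_zero _ hs), WithZero.log_pow, WithZero.log_pow] at this
  simp at this
  omega

lemma aux_wz2 (s : WithZero (Multiplicative ℤ)) (h : WithZero.exp (-1 : ℤ) * s ^ 3 ≤ 1) :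
    WithZero.exp (-1 : ℤ) * s ^ 3 < 1 := by
  refine lt_of_le_of_ne h fun e => ?_
  by_cases hs : s = 0
  · subst hs; simp at e
  · exact aux_wz s 1 hs (by simpa using e)

lemma aux_fwd {q : R} (hq : Prime q) (B β : R) (hB : ¬ q ∣ B) (hβ : ¬ q ∣ β)
    (s t : (primeSpec hq).adicCompletion K)
    (h : algebraMap R _ q * algebraMap R _ β ^ 2 * s ^ 3 + t ^ 3 = algebraMap R _ (B * β)) :
    ∃ c : R, q ∣ B * β - c ^ 3 := by
  have v1 : ∀ r : R, ¬ q ∣ r → Valued.v (algebraMap R ((primeSpec hq).adicCompletion K) r) = 1 := by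
    intro r hr
    rw [aux_val_alg, HeightOneSpectrum.intValuation_eq_one_iff]
    change _ ∉ Ideal.span {q}
    rwa [Ideal.mem_span_singleton]
  have hBβ : ¬ q ∣ B * β := fun h => (hq.dvd_or_dvd h).elim hB hβ
  have e1 : Valued.v (algebraMap R ((primeSpec hq).adicCompletion K) q *
      algebraMap R _ β ^ 2 * s ^ 3) = WithZero.exp (-1 : ℤ) * (Valued.v s) ^ 3 := by
    rw [map_mul, map_mul, map_pow, map_pow, v1 β hβ, aux_val_alg, aux_val_q]; simp
  have hsum := v1 _ hBβ
  rw [← h] at hsum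
  have hne : s ≠ 0 → Valued.v (algebraMap R ((primeSpec hq).adicCompletion K) q *
      algebraMap R _ β ^ 2 * s ^ 3) ≠ Valued.v (t ^ 3) := by
    intro hs
    rw [e1, map_pow]
    exact aux_wz _ _ (by simpa using hs)
  have hmax : Valued.v (algebraMap R ((primeSpec hq).adicCompletion K) q *
      algebraMap R _ β ^ 2 * s ^ 3) ≤ 1 ∧ Valued.v (t ^ 3) ≤ 1 := by
    by_cases hs : s = 0
    · subst hs
      simp at hsum ⊢
      rw [hsum]; simp
    · rw [Valuation.map_add_of_distinct_val _ (hne hs)] at hsum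
      exact max_le_iff.1 hsum.le
  have h1 := hmax.1
  rw [e1] at h1
  have h2 := aux_wz2 _ h1
  rw [← e1] at h2
  have ht : Valued.v t ≤ 1 := by
    have := hmax.2
    rw [map_pow] at this
    exact (pow_le_one_iff (three_ne_zero)).1 this
  obtain ⟨c, hc⟩ := aux_approx_s4 (primeSpec hq) t ht
  refine ⟨c, ?_⟩
  have hc1 : Valued.v (algebraMap R ((primeSpec hq).adicCompletion K) c) ≤ 1 := by
    rw [aux_val_alg]; exact HeightOneSpectrum.intValuation_le_one _ _
  have key : Valued.v (algebraMap R ((primeSpec hq).adicCompletion K) (B * β - c ^ 3)) < 1 := by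
    rw [map_sub, ← h, map_pow]
    set C := algebraMap R ((primeSpec hq).adicCompletion K) c
    have : algebraMap R ((primeSpec hq).adicCompletion K) q * algebraMap R _ β ^ 2 * s ^ 3
      + t ^ 3 - C ^ 3 = algebraMap R ((primeSpec hq).adicCompletion K) q * algebraMap R _ β ^ 2 * s ^ 3 + (C - t) * -(t ^ 2 + t * C + C ^ 2) := by ring
    rw [this]
    refine Valuation.map_add_lt _ h2 ?_
    rw [map_mul, Valuation.map_neg]
    refine mul_lt_one_of_lt_of_le hc ?_
    refine Valuation.map_add_le _ (Valuation.map_add_le _ ?_ ?_) ?_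
    · rw [map_pow]; exact pow_le_one₀ zero_le ht
    · rw [map_mul]; exact mul_le_one' ht hc1
    · rw [map_pow]; exact pow_le_one₀ zero_le hc1
  rw [aux_val_alg, HeightOneSpectrum.intValuation_lt_one_iff_mem] at key
  exact Ideal.mem_span_singleton.1 key

lemma aux_main {q : R} (hq : Prime q) (hq3 : ¬ q ∣ (3 : R)) (A α B β : R)
    (hAB : A = q * B) (hqB : ¬ q ∣ B) (hαβ : α = q ^ 2 * β) (hqβ : ¬ q ∣ β) :
    (∃ x y z : (primeSpec hq).adicCompletion K,
        ¬(x = 0 ∧ y = 0 ∧ z = 0) ∧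
        algebraMap R ((primeSpec hq).adicCompletion K) α * x ^ 3
          + (algebraMap R ((primeSpec hq).adicCompletion K) α)⁻¹ * y ^ 3
          = algebraMap R ((primeSpec hq).adicCompletion K) A * z ^ 3)
      ↔ ∃ c : R ⧸ Ideal.span {q},
          Ideal.Quotient.mk (Ideal.span {q}) (B * β) = c ^ 3 := by
  have hq0 : algebraMap R ((primeSpec hq).adicCompletion K) q ≠ 0 := by
    intro h
    have := aux_val_alg (K := K) (primeSpec hq) q
    rw [h, aux_val_q, map_zero] at this
    exact WithZero.exp_ne_zero this.symm
  have hβ0 : algebraMap R ((primeSpec hq).adicCompletion K) β ≠ 0 := by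
    intro h
    have := aux_val_alg (K := K) (primeSpec hq) β
    rw [h, map_zero] at this
    exact HeightOneSpectrum.intValuation_ne_zero _ β (by rintro rfl; simp at hqβ) this.symm
  have hA : algebraMap R ((primeSpec hq).adicCompletion K) A
      = algebraMap R _ q * algebraMap R _ B := by
    rw [← map_mul, ← hAB]
  have hα : algebraMap R ((primeSpec hq).adicCompletion K) α
      = algebraMap R _ q ^ 2 * algebraMap R _ β := by
    rw [hαβ]; simp
  have hBβ : ¬ q ∣ B * β := fun h => (hq.dvd_or_dvd h).elim hqB hqβ
  rw [hA, hα]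
  constructor
  · rintro ⟨x, y, z, hne, h⟩
    by_cases hz : z = 0
    · exfalso
      subst hz
      have h' : algebraMap R _ q * (algebraMap R _ q * algebraMap R _ β * x) ^ 3
          = algebraMap R _ β * (-y) ^ 3 := by
        field_simp at h
        linear_combination algebraMap R _ β * h
      have hx : x ≠ 0 := by
        rintro rfl
        simp [hβ0] at h'
        simp [h'] at hne
      have h2 := congrArg Valued.v h'
      have hv : Valued.v (algebraMap R ((primeSpec hq).adicCompletion K) β) = 1 := by
        rw [aux_val_alg, HeightOneSpectrum.intValuation_eq_one_iff]
        change _ ∉ Ideal.span {q}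
        rwa [Ideal.mem_span_singleton]
      rw [map_mul, map_mul, aux_val_alg _ q, aux_val_q, hv, one_mul, map_pow, map_pow] at h2
      exact aux_wz _ _ (by
        rw [Ne, map_eq_zero]
        exact mul_ne_zero (mul_ne_zero hq0 hβ0) hx) h2
    · obtain ⟨c, hc⟩ := aux_fwd (K := K) hq B β hqB hqβ (x / z)
        (y / (algebraMap R _ q * z)) (by
          rw [map_mul]
          field_simp at h ⊢
          linear_combination h)
      refine ⟨Ideal.Quotient.mk _ c, ?_⟩
      rw [← map_pow, Ideal.Quotient.eq, Ideal.mem_span_singleton]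
      exact hc
  · rintro ⟨c, hc⟩
    obtain ⟨c, rfl⟩ := Ideal.Quotient.mk_surjective c
    rw [← map_pow, Ideal.Quotient.eq, Ideal.mem_span_singleton] at hc
    obtain ⟨t, ht⟩ := aux_hensel (K := K) hq hq3 _ c hBβ hc
    refine ⟨0, algebraMap R _ q * t, 1, by simp, ?_⟩
    rw [mul_pow, ht, map_mul]
    field_simp
    ring

end aux

/-- Lemma 2.3, case `q² ‖ α`: if `A ∈ ℤ ∖ {0, ±1}` is cube-free,
`α ∈ ℤ[ζ₃]` is a nonzero cube-free integer, and `q` is a prime of `ℤ[ζ₃]` with `q ‖ A`,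
`q ∤ 3` and `q² ‖ α`, say `A = q·B` and `α = q²·β` with `q ∤ B`, `q ∤ β`, then
`C_{A,α}(k_q) ≠ ∅` iff the image of `(A/q)·(α/q²)` in the residue field `ℤ[ζ₃]/(q)` is a
cube. -/
theorem stmt4 (K : Type*) [Field K] [NumberField K] [IsCyclotomicExtension {3} ℚ K]
    (A : ℤ) (hA0 : A ≠ 0) (hA1 : A ≠ 1) (hA1' : A ≠ -1)
    (hAcf : ∀ p : ℤ, Prime p → ¬ p ^ 3 ∣ A)
    (α : 𝓞 K) (hα0 : α ≠ 0) (hαcf : ∀ p : 𝓞 K, Prime p → ¬ p ^ 3 ∣ α)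
    (q : 𝓞 K) (hq : Prime q) (hq3 : ¬ q ∣ (3 : 𝓞 K))
    (B β : 𝓞 K)
    (hAB : (A : 𝓞 K) = q * B) (hqB : ¬ q ∣ B)
    (hαβ : α = q ^ 2 * β) (hqβ : ¬ q ∣ β) :
    (∃ x y z : (primeSpec hq).adicCompletion K,
        ¬(x = 0 ∧ y = 0 ∧ z = 0) ∧
        algebraMap (𝓞 K) ((primeSpec hq).adicCompletion K) α * x ^ 3
          + (algebraMap (𝓞 K) ((primeSpec hq).adicCompletion K) α)⁻¹ * y ^ 3
          = algebraMap K ((primeSpec hq).adicCompletion K) (A : K) * z ^ 3)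
      ↔ ∃ c : 𝓞 K ⧸ Ideal.span {q},
          Ideal.Quotient.mk (Ideal.span {q}) (B * β) = c ^ 3 := by
  have hA : algebraMap K ((primeSpec hq).adicCompletion K) (A : K)
      = algebraMap (𝓞 K) ((primeSpec hq).adicCompletion K) (A : 𝓞 K) := by
    rw [map_intCast, map_intCast]
  rw [hA]
  exact aux_main (K := K) hq hq3 (A : 𝓞 K) α B β hAB hqB hαβ hqβ
end

section
/- Let A ∈ ℤ∖{0,±1} be a cube-free integer, let α ∈ ℤ[ζ₃] be a nonzero cube-free integer, and let p be a rational prime with p ≡ 2 (mod 3) (so p remains prime in ℤ[ζ₃]) such that p‖A (p divides A but p² does not). Let v_p(α) ∈ {0,1,2} be the p-adic valuation of α in ℤ[ζ₃]. Then C_{A,α}(k_p) ≠ ∅ if and only if the image of α·p^{-v_p(α)} in the residue field ℤ[ζ₃]/(p) ≅ 𝔽_{p²} is a cube. -/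
open NumberField IsDedekindDomain

section hensel
open WithZero Filter Topology

variable {L : Type*} [Field L] [hv : Valued L ℤᵐ⁰]

lemma aux_exists_exp_lt {g : ℤᵐ⁰} (hg : g ≠ 0) : ∃ N : ℕ, exp (-(N : ℤ)) < g := by
  refine ⟨(1 - log g).toNat, ?_⟩
  rw [← exp_log hg, exp_lt_exp, log_exp]
  have := Int.self_le_toNat (1 - log g)
  omega

lemma aux_le_of_lt_one {g : ℤᵐ⁰} (hg : g < 1) : g ≤ exp (-1 : ℤ) := by
  rcases eq_or_ne g 0 with rfl | h
  · simp
  · rw [← exp_log h, ← exp_zero, exp_lt_exp] at hg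
    rw [← exp_log h, exp_le_exp]
    omega

lemma aux_tendsto_zero {f : ℕ → L} (hf : ∀ n, Valued.v (f n) ≤ exp (-(n : ℤ))) :
    Tendsto f atTop (𝓝 0) := by
  rw [(Valued.hasBasis_nhds_zero L ℤᵐ⁰).tendsto_right_iff]
  intro γ _
  obtain ⟨N, hN⟩ := aux_exists_exp_lt (MonoidWithZeroHom.ValueGroup₀.embedding_unit_ne_zero γ)
  filter_upwards [eventually_ge_atTop N] with n hn
  change Valued.v.restrict (f n) < γ.1
  rw [Valuation.restrict_lt_iff_lt_embedding]
  refine lt_of_le_of_lt (hf n) (lt_of_le_of_lt ?_ hN)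
  rw [exp_le_exp]; omega

lemma aux_cauchy {f : ℕ → L} (hf : ∀ n, Valued.v (f (n + 1) - f n) ≤ exp (-(n : ℤ))) :
    CauchySeq f := by
  have key : ∀ N k : ℕ, Valued.v (f (N + k) - f N) ≤ exp (-(N : ℤ)) := by
    intro N k
    induction k with
    | zero => simp
    | succ k ih =>
      have : f (N + (k + 1)) - f N = (f (N + k + 1) - f (N + k)) + (f (N + k) - f N) := by
        rw [← add_assoc]; ring
      rw [this]
      refine Valuation.map_add_le _ ((hf _).trans ?_) ih
      rw [exp_le_exp]; push_cast; omega
  unfold CauchySeq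
  rw [Valued.cauchy_iff]
  refine ⟨inferInstance, fun γ => ?_⟩
  obtain ⟨N, hN⟩ := aux_exists_exp_lt (MonoidWithZeroHom.ValueGroup₀.embedding_unit_ne_zero γ)
  refine ⟨f '' Set.Ici N, image_mem_map (Ici_mem_atTop N), ?_⟩
  rintro _ ⟨a, ha, rfl⟩ _ ⟨b, hb, rfl⟩
  rw [Valuation.restrict_lt_iff_lt_embedding]
  refine lt_of_le_of_lt ?_ hN
  obtain ⟨k, rfl⟩ := Nat.exists_eq_add_of_le ha
  obtain ⟨l, rfl⟩ := Nat.exists_eq_add_of_le hb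
  have : f (N + l) - f (N + k) = (f (N + l) - f N) - (f (N + k) - f N) := by ring
  rw [this]
  exact Valuation.map_sub_le _ (key _ _) (key _ _)

lemma aux_hensel_one [CompleteSpace L] [T2Space L] (h3 : Valued.v (3 : L) = 1) {w : L}
    (hw : Valued.v (w - 1) < 1) : ∃ y : L, y ^ 3 = w := by
  have h30 : (3 : L) ≠ 0 := by
    intro h; rw [h] at h3; simp at h3
  let x : ℕ → L := fun n => Nat.rec 1 (fun _ t => t - (t ^ 3 - w) / 3) n
  have hx0 : x 0 = 1 := rfl
  have hxs : ∀ n, x (n + 1) = x n - (x n ^ 3 - w) / 3 := fun n => rfl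
  have e1 : exp (-1 : ℤ) ≤ (1 : ℤᵐ⁰) := by rw [← exp_zero, exp_le_exp]; omega
  have inv : ∀ n, Valued.v (x n - 1) ≤ exp (-1 : ℤ) ∧
      Valued.v (x n ^ 3 - w) ≤ exp (-((n : ℤ) + 1)) := by
    intro n
    induction n with
    | zero =>
      refine ⟨by simp [hx0], ?_⟩
      rw [hx0, one_pow, Valuation.map_sub_swap]
      simpa using aux_le_of_lt_one hw
    | succ n ih =>
      obtain ⟨i1, i2⟩ := ih
      have ee : exp (-((n : ℤ) + 1)) ≤ exp (-1 : ℤ) := by rw [exp_le_exp]; omega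
      have hx1 : Valued.v (x n) ≤ 1 := by
        have : x n = (x n - 1) + 1 := by ring
        rw [this]
        exact Valuation.map_add_le _ (i1.trans e1) (by simp)
      have i2' := i2.trans ee
      have i3 := i2'.trans e1
      constructor
      · have : x (n + 1) - 1 = (x n - 1) - (x n ^ 3 - w) / 3 := by rw [hxs]; ring
        rw [this]
        refine Valuation.map_sub_le _ i1 ?_
        rw [map_div₀, h3, div_one]; exact i2'
      · have : x (n + 1) ^ 3 - w = (x n ^ 3 - w) * (-((x n - 1) * ((x n - 1) + 2)) +
            (x n ^ 3 - w) * (x n / 3 - (x n ^ 3 - w) / 3 ^ 3)) := by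
          rw [hxs]; field_simp; ring
        rw [this, map_mul]
        have s : exp (-(((n + 1 : ℕ) : ℤ) + 1)) = exp (-((n : ℤ) + 1)) * exp (-1 : ℤ) := by
          rw [← exp_add]; congr 1
        rw [s]
        refine mul_le_mul' i2 (Valuation.map_add_le _ ?_ ?_)
        · rw [Valuation.map_neg, map_mul]
          refine mul_le_of_le_of_le_one i1 ?_
          refine Valuation.map_add_le _ (i1.trans e1) ?_
          have : (2 : L) = 1 + 1 := by norm_num
          rw [this]
          exact Valuation.map_add_le _ (by simp) (by simp)
        · rw [map_mul]
          refine mul_le_of_le_of_le_one i2' ?_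
          refine Valuation.map_sub_le _ ?_ ?_
          · rw [map_div₀, h3, div_one]; exact hx1
          · rw [map_div₀, map_pow, h3, one_pow, div_one]; exact i3
  have hc : CauchySeq x := by
    apply aux_cauchy
    intro n
    have : x (n + 1) - x n = - ((x n ^ 3 - w) / 3) := by rw [hxs]; ring
    rw [this, Valuation.map_neg, map_div₀, h3, div_one]
    refine (inv n).2.trans ?_
    rw [exp_le_exp]; omega
  obtain ⟨y, hy⟩ := cauchySeq_tendsto_of_complete hc
  refine ⟨y, ?_⟩
  have t1 : Tendsto (fun n => x n ^ 3 - w) atTop (𝓝 (y ^ 3 - w)) := (hy.pow 3).sub_const w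
  have t2 : Tendsto (fun n => x n ^ 3 - w) atTop (𝓝 0) := by
    apply aux_tendsto_zero
    intro n
    refine (inv n).2.trans ?_
    rw [exp_le_exp]; omega
  exact sub_eq_zero.mp (tendsto_nhds_unique t1 t2)

lemma aux_hensel_s5 [CompleteSpace L] [T2Space L] (h3 : Valued.v (3 : L) = 1) {u c : L}
    (hu : Valued.v u = 1) (h : Valued.v (u - c ^ 3) < 1) : ∃ y : L, y ^ 3 = u := by
  have hc3 : Valued.v (c ^ 3) = 1 := by
    have := Valuation.map_sub_eq_of_lt_right (v := (Valued.v : Valuation L ℤᵐ⁰))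
      (x := u - c ^ 3) (y := u) (by rwa [hu])
    rw [← hu, ← this, Valuation.map_sub_swap]; congr 1; ring
  have hc0 : c ≠ 0 := by rintro rfl; simp at hc3
  obtain ⟨y, hy⟩ := aux_hensel_one h3 (w := u / c ^ 3) (by
    have : u / c ^ 3 - 1 = (u - c ^ 3) / c ^ 3 := by field_simp
    rw [this, map_div₀, hc3, div_one]; exact h)
  exact ⟨y * c, by rw [mul_pow, hy]; field_simp⟩

lemma aux_descent {a b w x y z : L} (ha : Valued.v a = 1) (hb : Valued.v b = 1)
    {j : ℤ} (hw : Valued.v w = exp j) (hj : ¬ (3 : ℤ) ∣ j)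
    (h0 : ¬ (x = 0 ∧ y = 0 ∧ z = 0)) (h : a * x ^ 3 + b * y ^ 3 = w * z ^ 3) :
    ∃ t : L, Valued.v t = 1 ∧ Valued.v (a - b * t ^ 3) < 1 := by
  have key : ∀ s : L, Valued.v (w * z ^ 3) = Valued.v s ^ 3 → z = 0 ∧ s = 0 := by
    intro s hs
    rw [map_mul, map_pow, hw] at hs
    by_cases hz : z = 0
    · subst hz
      refine ⟨rfl, ?_⟩
      simpa using hs.symm
    · exfalso
      have hz' : Valued.v z ≠ 0 := by simpa using hz
      have hs' : Valued.v s ≠ 0 := by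
        intro h; rw [h] at hs; simp at hs; exact hz hs
      rw [← exp_log hz', ← exp_log hs', ← exp_nsmul, ← exp_nsmul, ← exp_add, exp_inj] at hs
      apply hj
      simp at hs
      omega
  have va : Valued.v (a * x ^ 3) = Valued.v x ^ 3 := by rw [map_mul, ha, one_mul, map_pow]
  have vb : Valued.v (b * y ^ 3) = Valued.v y ^ 3 := by rw [map_mul, hb, one_mul, map_pow]
  have hxy : Valued.v x = Valued.v y := by
    rcases lt_trichotomy (Valued.v x) (Valued.v y) with hlt | he | hlt
    · exfalso
      have := Valuation.map_add_eq_of_lt_right (v := (Valued.v : Valuation L ℤᵐ⁰))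
        (x := a * x ^ 3) (y := b * y ^ 3)
        (by rw [va, vb]; exact pow_lt_pow_left₀ hlt zero_le (by norm_num))
      rw [h, vb] at this
      obtain ⟨_, rfl⟩ := key _ this
      simp at hlt
    · exact he
    · exfalso
      have := Valuation.map_add_eq_of_lt_left (v := (Valued.v : Valuation L ℤᵐ⁰))
        (x := a * x ^ 3) (y := b * y ^ 3)
        (by rw [va, vb]; exact pow_lt_pow_left₀ hlt zero_le (by norm_num))
      rw [h, va] at this
      obtain ⟨_, rfl⟩ := key _ this
      simp at hlt
  have hx : x ≠ 0 := by
    rintro rfl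
    have hy : y = 0 := by simpa using hxy.symm
    subst hy
    exact h0 ⟨rfl, rfl, (key 0 (by rw [← h]; simp)).1⟩
  have hxv : Valued.v x ≠ 0 := by simpa using hx
  refine ⟨-(y / x), by rw [Valuation.map_neg, map_div₀, hxy, div_self (hxy ▸ hxv)], ?_⟩
  have : a - b * (-(y / x)) ^ 3 = w * z ^ 3 / x ^ 3 := by
    rw [← h]; field_simp; ring
  rw [this, map_div₀, map_pow]
  have hle : Valued.v (w * z ^ 3) ≤ Valued.v x ^ 3 := by
    rw [← h]
    exact Valuation.map_add_le _ va.le (by rw [vb, hxy])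
  have hlt := lt_of_le_of_ne hle (fun e => hx (key x e).2)
  exact (div_lt_one₀ (pow_pos (zero_lt_iff.mpr hxv) 3)).mpr hlt

lemma aux_fwd_s5 {m : ℕ} (hm : m < 3) {P b a x y z : L} (vP : Valued.v P = exp (-1 : ℤ))
    (vb : Valued.v b = 1) (va : Valued.v a = 1) (h0 : ¬ (x = 0 ∧ y = 0 ∧ z = 0))
    (h : P ^ m * b * x ^ 3 + (P ^ m * b)⁻¹ * y ^ 3 = P * a ^ 3 * z ^ 3) :
    ∃ s : L, Valued.v s ≤ 1 ∧ Valued.v (b - s ^ 3) < 1 := by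
  have a0 : a ≠ 0 := by rintro rfl; simp at va
  have b0 : b ≠ 0 := by rintro rfl; simp at vb
  have P0 : P ≠ 0 := by rintro rfl; rw [map_zero] at vP; exact exp_ne_zero vP.symm
  interval_cases m
  · obtain ⟨t, ht, ht'⟩ := aux_descent (a := b ^ 2) (b := 1) (w := P * a ^ 3 * b)
      (x := x) (y := y) (z := z) (j := -1)
      (by rw [map_pow, vb, one_pow]) (by simp)
      (by simp [vP, va, vb]) (by norm_num) h0
      (by field_simp at h; linear_combination h)
    have t0 : t ≠ 0 := by rintro rfl; simp at ht
    refine ⟨b / t, by simp [vb, ht], ?_⟩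
    have : b - (b / t) ^ 3 = -(b * (b ^ 2 - 1 * t ^ 3) / t ^ 3) := by field_simp; ring
    rw [this, Valuation.map_neg, map_div₀, map_mul, map_pow, vb, ht, one_mul, one_pow, div_one]
    exact ht'
  · obtain ⟨t, ht, ht'⟩ := aux_descent (a := b) (b := - a ^ 3) (w := - (P ^ 2 * b)⁻¹)
      (x := x) (y := z) (z := y) (j := 2)
      vb (by rw [Valuation.map_neg, map_pow, va, one_pow])
      (by rw [Valuation.map_neg, map_inv₀, map_mul, map_pow, vP, vb, mul_one,
            ← WithZero.exp_nsmul, ← WithZero.exp_neg]; norm_num) (by norm_num) (by tauto)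
      (by field_simp at h ⊢; linear_combination h)
    refine ⟨-(a * t), by simp [va, ht], ?_⟩
    have : b - (-(a * t)) ^ 3 = b - - a ^ 3 * t ^ 3 := by ring
    rw [this]
    exact ht'
  · obtain ⟨t, ht, ht'⟩ := aux_descent (a := 1) (b := - a ^ 3 * b) (w := - (P ^ 4 * b ^ 2))
      (x := y) (y := P * z) (z := x) (j := -4)
      (by simp) (by rw [map_mul, Valuation.map_neg, map_pow, va, vb]; simp)
      (by rw [Valuation.map_neg, map_mul, map_pow, map_pow, vP, vb, one_pow, mul_one,
            ← WithZero.exp_nsmul]; norm_num) (by norm_num)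
      (by
        rintro ⟨h1, h2, h3⟩
        exact h0 ⟨h3, h1, (mul_eq_zero.mp h2).resolve_left P0⟩)
      (by field_simp at h ⊢; linear_combination h)
    have t0 : t ≠ 0 := by rintro rfl; simp at ht
    refine ⟨-(a * t)⁻¹, by rw [Valuation.map_neg, map_inv₀, map_mul, va, ht]; simp, ?_⟩
    have : b - (-(a * t)⁻¹) ^ 3 = (1 - - a ^ 3 * b * t ^ 3) / (a * t) ^ 3 := by
      field_simp; ring
    rw [this, map_div₀, map_pow, map_mul, va, ht, one_mul, one_pow, div_one]
    exact ht'

lemma aux_bwd {L : Type*} [Field L] {m : ℕ} (hm : m < 3) {P a g : L} (P0 : P ≠ 0) (a0 : a ≠ 0) (g0 : g ≠ 0) :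
    ∃ x y z : L, ¬ (x = 0 ∧ y = 0 ∧ z = 0) ∧
      P ^ m * g ^ 3 * x ^ 3 + (P ^ m * g ^ 3)⁻¹ * y ^ 3 = P * a ^ 3 * z ^ 3 := by
  interval_cases m
  · refine ⟨g⁻¹, -g, 0, by simp [g0], ?_⟩
    field_simp; ring
  · refine ⟨a, 0, g, by simp [g0], ?_⟩
    ring
  · refine ⟨0, P * a * g, 1, by simp, ?_⟩
    field_simp; ring

end hensel

section local_facts
open WithZero Filter Topology

lemma aux_int_cube {p : ℕ} (hp : p.Prime) (hp3 : p % 3 = 2) {B : ℤ} (hB : ¬ (p : ℤ) ∣ B) :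
    ∃ a : ℤ, (p : ℤ) ∣ B - a ^ 3 := by
  have := Fact.mk hp
  obtain ⟨k, hk⟩ : ∃ k, p = 3 * k + 2 := ⟨p / 3, by omega⟩
  refine ⟨B ^ (2 * k + 1), ?_⟩
  have hB' : (B : ZMod p) ≠ 0 := by rwa [Ne, ZMod.intCast_zmod_eq_zero_iff_dvd]
  rw [← ZMod.intCast_zmod_eq_zero_iff_dvd]
  push_cast
  have h1 := ZMod.pow_card_sub_one_eq_one hB'
  have h2 : ((B : ZMod p) ^ (2 * k + 1)) ^ 3 = ((B : ZMod p) ^ (p - 1)) ^ 2 * B := by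
    rw [← pow_mul, ← pow_mul, ← pow_succ]; congr 1; omega
  rw [h2, h1]; ring

lemma aux_not_dvd {R : Type*} [CommRing R] {p : ℕ} (hp : p.Prime) (hpin : Prime (p : R))
    {n : ℤ} (hn : ¬ (p : ℤ) ∣ n) : ¬ (p : R) ∣ (n : R) := by
  intro h
  have hc : IsCoprime (p : ℤ) n :=
    ((Nat.prime_iff_prime_int.mp hp).coprime_iff_not_dvd).mpr hn
  obtain ⟨a, b, hab⟩ := hc
  apply hpin.not_isUnit
  apply isUnit_of_dvd_one
  have : (1 : R) = (a : R) * (p : R) + b * n := by exact_mod_cast (congrArg (Int.cast : ℤ → R) hab).symm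
  rw [this]
  exact dvd_add (dvd_mul_left _ _) (h.mul_left _)

variable {R : Type*} [CommRing R] [IsDedekindDomain R] (K : Type*) [Field K] [Algebra R K]
  [IsFractionRing R K] {q : R} (hq : Prime q)

lemma aux_val_s5 (r : R) : Valued.v (algebraMap R ((primeSpec hq).adicCompletion K) r) =
    (primeSpec hq).valuation K (algebraMap R K r) :=
  HeightOneSpectrum.valuedAdicCompletion_eq_valuation (primeSpec hq) r

lemma aux_val_le (r : R) : Valued.v (algebraMap R ((primeSpec hq).adicCompletion K) r) ≤ 1 := by
  rw [aux_val_s5]; exact HeightOneSpectrum.valuation_le_one _ r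

lemma aux_val_lt (r : R) :
    Valued.v (algebraMap R ((primeSpec hq).adicCompletion K) r) < 1 ↔ q ∣ r := by
  rw [aux_val_s5]
  rw [HeightOneSpectrum.valuation_lt_one_iff_mem]
  exact Ideal.mem_span_singleton

lemma aux_val_eq {r : R} (h : ¬ q ∣ r) :
    Valued.v (algebraMap R ((primeSpec hq).adicCompletion K) r) = 1 :=
  le_antisymm (aux_val_le K hq r) (not_lt.mp fun h' => h ((aux_val_lt K hq r).mp h'))

lemma aux_val_q_s5 :
    Valued.v (algebraMap R ((primeSpec hq).adicCompletion K) q) = exp (-1 : ℤ) := by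
  rw [aux_val_s5, HeightOneSpectrum.valuation_of_algebraMap]
  exact HeightOneSpectrum.intValuation_singleton _ hq.ne_zero rfl

lemma aux_approx_s5 (g : (primeSpec hq).adicCompletion K) (hg : Valued.v g ≤ 1) :
    ∃ c : R, Valued.v (g - algebraMap R ((primeSpec hq).adicCompletion K) c) < 1 := by
  have hd := HeightOneSpectrum.denseRange_algebraMap (v := primeSpec hq) (K := K)
  have hU : {y : (primeSpec hq).adicCompletion K | Valued.v (y - g) < 1} ∈ 𝓝 g := by
    rw [Valued.mem_nhds]
    refine ⟨1, fun y hy => ?_⟩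
    have hy' : Valued.v.restrict (y - g) < 1 := hy
    rwa [Valuation.restrict_lt_one_iff] at hy'
  obtain ⟨k, hk⟩ := hd.exists_mem_open isOpen_interior ⟨g, mem_interior_iff_mem_nhds.mpr hU⟩
  have hk' : Valued.v (algebraMap K ((primeSpec hq).adicCompletion K) k - g) < 1 :=
    (interior_subset hk : _ ∈ {y : (primeSpec hq).adicCompletion K | Valued.v (y - g) < 1})
  have vk : ∀ k : K, Valued.v (algebraMap K ((primeSpec hq).adicCompletion K) k) =
    (primeSpec hq).valuation K k :=
    fun k => HeightOneSpectrum.valuedAdicCompletion_eq_valuation' (primeSpec hq) k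
  have hk1 : (primeSpec hq).valuation K k ≤ 1 := by
    rw [← vk]
    have : algebraMap K ((primeSpec hq).adicCompletion K) k =
      (algebraMap K ((primeSpec hq).adicCompletion K) k - g) + g := by ring
    rw [this]
    exact Valuation.map_add_le _ hk'.le hg
  obtain ⟨c, hc⟩ := HeightOneSpectrum.exists_valuation_sub_lt_of_integer (primeSpec hq) hk1 1
  refine ⟨c, ?_⟩
  rw [← vk, map_sub, ← IsScalarTower.algebraMap_apply] at hc
  rw [Valuation.map_sub_swap]
  have : algebraMap R ((primeSpec hq).adicCompletion K) c - g =
    (algebraMap R ((primeSpec hq).adicCompletion K) c -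
      algebraMap K ((primeSpec hq).adicCompletion K) k) +
      (algebraMap K ((primeSpec hq).adicCompletion K) k - g) := by ring
  rw [this]
  exact Valuation.map_add_lt _ hc hk'

lemma aux_residue {b : R} {s : (primeSpec hq).adicCompletion K} (hs : Valued.v s ≤ 1)
    (h : Valued.v (algebraMap R ((primeSpec hq).adicCompletion K) b - s ^ 3) < 1) :
    ∃ c : R ⧸ Ideal.span {q}, Ideal.Quotient.mk (Ideal.span {q}) b = c ^ 3 := by
  obtain ⟨c, hc⟩ := aux_approx_s5 K hq s hs
  refine ⟨Ideal.Quotient.mk _ c, ?_⟩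
  rw [← map_pow, Ideal.Quotient.eq, Ideal.mem_span_singleton, ← aux_val_lt K hq]
  set ι := algebraMap R ((primeSpec hq).adicCompletion K)
  have : ι (b - c ^ 3) = (ι b - s ^ 3) + (s - ι c) * (s ^ 2 + s * ι c + ι c ^ 2) := by
    rw [map_sub, map_pow]; ring
  rw [this]
  refine Valuation.map_add_lt _ h ?_
  rw [map_mul]
  refine mul_lt_of_lt_of_le_one hc ?_
  have hc1 := aux_val_le K hq c
  refine Valuation.map_add_le _ (Valuation.map_add_le _ ?_ ?_) ?_
  · rw [map_pow]; exact pow_le_one₀ zero_le hs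
  · rw [map_mul]; exact mul_le_one' hs hc1
  · rw [map_pow]; exact pow_le_one₀ zero_le hc1

end local_facts

/-- Lemma 2.4: if `A ∈ ℤ ∖ {0, ±1}` is cube-free, `α ∈ ℤ[ζ₃]` is a nonzero
cube-free integer, and `p ≡ 2 (mod 3)` is a rational prime (hence inert in `ℤ[ζ₃]`) with
`p ‖ A`, writing `α = p^m · β` with `p ∤ β` (so `m = v_p(α)`), then `C_{A,α}(k_p) ≠ ∅` iff
the image of `β = α·p^{-v_p(α)}` in the residue field `ℤ[ζ₃]/(p) ≅ 𝔽_{p²}` is a cube. -/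
theorem stmt5 (K : Type*) [Field K] [NumberField K] [IsCyclotomicExtension {3} ℚ K]
    (A : ℤ) (hA0 : A ≠ 0) (hA1 : A ≠ 1) (hA1' : A ≠ -1)
    (hAcf : ∀ p : ℤ, Prime p → ¬ p ^ 3 ∣ A)
    (α : 𝓞 K) (hα0 : α ≠ 0) (hαcf : ∀ p : 𝓞 K, Prime p → ¬ p ^ 3 ∣ α)
    (p : ℕ) (hp : p.Prime) (hp3 : p % 3 = 2)
    (hpin : Prime ((p : 𝓞 K)))
    (hpA : (p : ℤ) ∣ A) (hpA2 : ¬ (p : ℤ) ^ 2 ∣ A)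
    (m : ℕ) (β : 𝓞 K) (hαβ : α = (p : 𝓞 K) ^ m * β) (hpβ : ¬ (p : 𝓞 K) ∣ β) :
    (∃ x y z : (primeSpec hpin).adicCompletion K,
        ¬(x = 0 ∧ y = 0 ∧ z = 0) ∧
        algebraMap (𝓞 K) ((primeSpec hpin).adicCompletion K) α * x ^ 3
          + (algebraMap (𝓞 K) ((primeSpec hpin).adicCompletion K) α)⁻¹ * y ^ 3
          = algebraMap K ((primeSpec hpin).adicCompletion K) (A : K) * z ^ 3)
      ↔ ∃ c : 𝓞 K ⧸ Ideal.span {(p : 𝓞 K)},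
          Ideal.Quotient.mk (Ideal.span {(p : 𝓞 K)}) β = c ^ 3 := by
  have hBx : ∃ B : ℤ, A = p * B := hpA
  obtain ⟨B, rfl⟩ := hBx
  have hB : ¬ (p : ℤ) ∣ B := by
    rintro ⟨C, rfl⟩
    exact hpA2 ⟨C, by ring⟩
  have hm : m < 3 := by
    by_contra h
    push Not at h
    exact hαcf _ hpin (hαβ ▸ Dvd.dvd.mul_right (pow_dvd_pow _ h) β)
  set L := (primeSpec hpin).adicCompletion K with hL
  set ι := algebraMap (𝓞 K) L with hι
  have hAK : algebraMap K L (((p : ℤ) * B : ℤ) : K) = ι (p : 𝓞 K) * ι (B : 𝓞 K) := by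
    rw [map_intCast, map_natCast, map_intCast]; push_cast; ring
  rw [hAK, hαβ, map_mul, map_pow]
  have vP : Valued.v (ι (p : 𝓞 K)) = WithZero.exp (-1 : ℤ) := aux_val_q_s5 K hpin
  have vb : Valued.v (ι β) = 1 := aux_val_eq K hpin hpβ
  have v3 : Valued.v (3 : L) = 1 := by
    have := aux_val_eq K hpin (aux_not_dvd hp hpin (n := 3) (by
      intro h
      have h' : p ∣ 3 := by exact_mod_cast h
      have := (Nat.prime_dvd_prime_iff_eq hp Nat.prime_three).mp h'
      omega))
    rw [Int.cast_ofNat, map_ofNat] at this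
    exact this
  have vB : Valued.v (ι (B : 𝓞 K)) = 1 := aux_val_eq K hpin (aux_not_dvd hp hpin hB)
  obtain ⟨a, ha⟩ : ∃ a : L, a ^ 3 = ι (B : 𝓞 K) := by
    obtain ⟨a, ha⟩ := aux_int_cube hp hp3 hB
    refine aux_hensel_s5 v3 vB (c := ι (a : 𝓞 K)) ?_
    rw [← map_pow, ← map_sub]
    refine (aux_val_lt K hpin _).mpr ?_
    obtain ⟨d, hd⟩ := ha
    exact ⟨d, by exact_mod_cast congrArg (Int.cast : ℤ → 𝓞 K) hd⟩
  rw [← ha]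
  have va : Valued.v a = 1 := by
    rw [← ha, map_pow] at vB
    exact (pow_eq_one_iff_of_nonneg zero_le (by norm_num)).mp vB
  have a0 : a ≠ 0 := by rintro rfl; simp at va
  have b0 : ι β ≠ 0 := by intro h; rw [h] at vb; simp at vb
  have P0 : ι (p : 𝓞 K) ≠ 0 := by intro h; rw [h, map_zero] at vP; exact WithZero.exp_ne_zero vP.symm
  constructor
  · rintro ⟨x, y, z, h0, h⟩
    obtain ⟨s, hs, hs'⟩ : ∃ s : L, Valued.v s ≤ 1 ∧ Valued.v (ι β - s ^ 3) < 1 := by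
      exact aux_fwd_s5 hm vP vb va h0 h
    exact aux_residue K hpin hs hs'
  · rintro ⟨c, hc⟩
    obtain ⟨c, rfl⟩ := Ideal.Quotient.mk_surjective c
    obtain ⟨g, hg⟩ : ∃ g : L, g ^ 3 = ι β := by
      refine aux_hensel_s5 v3 vb (c := ι c) ?_
      rw [← map_pow, ← map_sub]
      refine (aux_val_lt K hpin _).mpr ?_
      rwa [← map_pow, Ideal.Quotient.eq, Ideal.mem_span_singleton] at hc
    have g0 : g ≠ 0 := by rintro rfl; simp at hg; exact b0 hg.symm
    rw [← hg]
    exact aux_bwd hm P0 a0 g0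
end
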